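/- Fix 3 ≤ k ≤ n and λ̄ = (λ_k,…,λ_n) ∈ ℝ^{n−k+1}. Let f̃ be the smooth function of (x_1,…,x_{k−1}) near 0 with f̃(0)=0 defined implicitly by f̃ = f(x_1,…,x_{k−1}, λ_k f̃, …, λ_n f̃), so that the graph of f̃ is the section M_{λ̄} of M by the k-space π_{λ̄} = {x_σ = λ_σ x_{n+1}, σ = k,…,n}. Let g̃ be the Moutard hyperquadric polynomial of M_{λ̄} in the x_1-direction, built from the degree ≤ 4 Taylor coefficients of f̃ at 0 by the same formulas (with the same signs ε_1,…,ε_{k−1}). Then g̃(x_1,…,x_{k−1}, y) = g_{β*}(x_1,…,x_{k−1}, λ_k y, …, λ_n y, y) for all (x_1,…,x_{k−1}, y); that is, the Moutard quadric of M_{λ̄} in the direction x_1 coincides with the intersection of the Moutard hyperquadric of M in the direction x_1 with the k-space π_{λ̄}. -/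

import Mathlib

/-!
Write `ι` for the inclusion `ℝ^{k-1} → ℝⁿ` and `L` for the vector with entries `λ_σ` (`σ ≥ k`) and
`0` otherwise, so that `ft = f ∘ g` near `0` with `g x = ι x + ft x • L`. The chain rule reads
`∂_u (h ∘ g) = (∂_{ιu} h) ∘ g + ∂_u ft · (∂_L h) ∘ g`. Differentiating `ft = f ∘ g` repeatedly
and using at `0` that `df = 0` and that `ι v` and `L` are orthogonal for the Hessian of `f`
gives, with `u = e₁`,

* `ft_{uuv} = f_{uuv}`,
* `ft_{uuuu} = f_{uuuu} + 6 f_{uu} f_{uuL} + 3 f_{uu}² f_{LL}`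

(`sectionDeriv`, where the mixed derivatives of `f` are not yet reordered by symmetry).

Hence `K'₁₁σ = K₁₁σ` and `β' = β + 2ε₁ Σ K₁₁σ λ_σ + ½ Σ ε_σ λ_σ²`, and the two extra terms are
the `y²`-terms which the substitution `x_σ = λ_σ y` produces in the polynomial of `M`.
-/

open Filter Topology

/-- The `i`-th standard basis vector of `ℝᵐ`. -/
noncomputable def stdBasis (m : ℕ) (i : Fin m) : Fin m → ℝ := Pi.single i 1

/-- The Moutard hyperquadric polynomial in the direction of the `i0`-th axis, for a
hypersurface with Blaschke-metric signs `ε`, third-order coefficients `K₁₁₁ = K111`,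
`K₁₁σ = K11 σ`, and pencil parameter `β`:
`−y + (1/2)Σ_σ ε_σ x_σ² + (2/3)ε₁K₁₁₁ x₁ y + 2ε₁ Σ_{σ≠1} K₁₁σ x_σ y + β y²`. -/
noncomputable def moutardPoly {m : ℕ} (i0 : Fin m) (ε : Fin m → ℝ)
    (K111 : ℝ) (K11 : Fin m → ℝ) (β : ℝ) (x : Fin m → ℝ) (y : ℝ) : ℝ :=
  -y + (1 / 2) * ∑ σ, ε σ * (x σ) ^ 2 + (2 / 3) * ε i0 * K111 * x i0 * y
    + 2 * ε i0 * (∑ σ ∈ Finset.univ.erase i0, K11 σ * x σ) * y + β * y ^ 2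

open scoped ContDiff

section DirectionalDerivatives

variable {V E : Type*} [NormedAddCommGroup V] [NormedSpace ℝ V]
  [NormedAddCommGroup E] [NormedSpace ℝ E]

/-- The directional derivative of `h` along the constant vector field `v`, as a function. -/
noncomputable def dirD (v : V) (h : V → ℝ) : V → ℝ := fun x => fderiv ℝ h x v

/-- `h` is smooth at `0`, and its derivative along `u` agrees with `h'` near `0`. Tracking the
germ, rather than the value at `0`, allows iteration. -/
def GermD (u : V) (h h' : V → ℝ) : Prop :=
  ContDiffAt ℝ ∞ h 0 ∧ dirD u h =ᶠ[𝓝 0] h'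

lemma contDiffAt_dirD {h : V → ℝ} {x : V} (v : V) (hh : ContDiffAt ℝ ∞ h x) :
    ContDiffAt ℝ ∞ (dirD v h) x :=
  (hh.fderiv_right (m := ∞) (by simp)).clm_apply contDiffAt_const

lemma contDiff_dirD {h : V → ℝ} (v : V) (hh : ContDiff ℝ ∞ h) : ContDiff ℝ ∞ (dirD v h) :=
  contDiff_iff_contDiffAt.2 fun _ => contDiffAt_dirD v hh.contDiffAt

lemma eventually_differentiableAt {h : V → ℝ} (hh : ContDiffAt ℝ ∞ h 0) :
    ∀ᶠ x in 𝓝 (0 : V), DifferentiableAt ℝ h x := by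
  have h1 : ContDiffAt ℝ 1 h 0 := hh.of_le (by simp)
  filter_upwards [h1.eventually (by simp)] with x hx
  exact hx.differentiableAt (by simp)

lemma GermD.self {h : V → ℝ} (u : V) (hh : ContDiffAt ℝ ∞ h 0) : GermD u h (dirD u h) :=
  ⟨hh, EventuallyEq.rfl⟩

lemma GermD.add {u : V} {a a' b b' : V → ℝ} (ha : GermD u a a') (hb : GermD u b b') :
    GermD u (a + b) (a' + b') := by
  refine ⟨ha.1.add hb.1, ?_⟩
  filter_upwards [eventually_differentiableAt ha.1, eventually_differentiableAt hb.1, ha.2, hb.2]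
    with x h1 h2 h3 h4
  simp only [dirD, Pi.add_apply] at *
  rw [fderiv_add h1 h2, add_apply, h3, h4]

lemma GermD.mul {u : V} {a a' b b' : V → ℝ} (ha : GermD u a a') (hb : GermD u b b') :
    GermD u (a * b) (a' * b + a * b') := by
  refine ⟨ha.1.mul hb.1, ?_⟩
  filter_upwards [eventually_differentiableAt ha.1, eventually_differentiableAt hb.1, ha.2, hb.2]
    with x h1 h2 h3 h4
  simp only [dirD, Pi.add_apply, Pi.mul_apply] at *
  rw [fderiv_mul h1 h2]
  simp [h3, h4]
  ring

lemma dirD_congr {a b : V → ℝ} (hab : a =ᶠ[𝓝 0] b) (u : V) : dirD u a =ᶠ[𝓝 0] dirD u b := by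
  filter_upwards [hab.fderiv (𝕜 := ℝ)] with x hx
  simp [dirD, hx]

lemma GermD.dirD_eventuallyEq {u : V} {a b b' : V → ℝ} (hab : a =ᶠ[𝓝 0] b)
    (hb : GermD u b b') : dirD u a =ᶠ[𝓝 0] b' := by
  exact (dirD_congr hab u).trans hb.2

/-- The chain rule along the parametrization `x ↦ ι x + ft x • L` of the section. -/
lemma GermD.comp (ι : V →L[ℝ] E) (L : E) {ft : V → ℝ} (hft : ContDiffAt ℝ ∞ ft 0)
    {h : E → ℝ} (hh : ContDiff ℝ ∞ h) (u : V) :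
    GermD u (fun x => h (ι x + ft x • L))
      ((fun x => dirD (ι u) h (ι x + ft x • L))
        + dirD u ft * (fun x => dirD L h (ι x + ft x • L))) := by
  constructor
  · exact hh.contDiffAt.comp 0 (ι.contDiff.contDiffAt.add (hft.smul contDiffAt_const))
  · filter_upwards [eventually_differentiableAt hft] with x hx
    have hg : HasFDerivAt (fun x => ι x + ft x • L) (ι + (fderiv ℝ ft x).smulRight L) x :=
      ι.hasFDerivAt.add (hx.hasFDerivAt.smul_const L)
    have hH : HasFDerivAt h (fderiv ℝ h (ι x + ft x • L)) (ι x + ft x • L) :=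
      (hh.differentiable (by simp) _).hasFDerivAt
    have hc := (hH.comp x hg).fderiv
    simp only [Function.comp_def] at hc
    simp [dirD, hc]

section Section

variable (ι : V →L[ℝ] E) (L : E) {ft : V → ℝ} {f : E → ℝ}

/-- Third and fourth derivatives at `0` of `ft = f ∘ g`, `g x = ι x + ft x • L`, when `df = 0` at
`0` and the Hessian of `f` there vanishes on `(ι u, L)` and on `(L, ι v)`. -/
lemma sectionDeriv (hf : ContDiff ℝ ∞ f) (hft : ContDiffAt ℝ ∞ ft 0) (hft0 : ft 0 = 0)
    (he : ft =ᶠ[𝓝 0] fun x => f (ι x + ft x • L)) (hd : ∀ a, dirD a f 0 = 0) (u v : V)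
    (hu : dirD (ι u) (dirD L f) 0 = 0) (hv : dirD L (dirD (ι v) f) 0 = 0) :
    dirD u (dirD u (dirD v ft)) 0 = dirD (ι u) (dirD (ι u) (dirD (ι v) f)) 0 ∧
    dirD u (dirD u (dirD u (dirD v ft))) 0 =
      dirD (ι u) (dirD (ι u) (dirD (ι u) (dirD (ι v) f))) 0
      + dirD (ι u) (dirD (ι u) f) 0 * (dirD L (dirD (ι u) (dirD (ι v) f)) 0
        + 2 * dirD (ι u) (dirD L (dirD (ι v) f)) 0)
      + 3 * dirD (ι u) (dirD (ι v) f) 0 * (dirD (ι u) (dirD (ι u) (dirD L f)) 0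
        + dirD (ι u) (dirD (ι u) f) 0 * dirD L (dirD L f) 0) := by
  have c {h : E → ℝ} (hh : ContDiff ℝ ∞ h) := GermD.comp ι L hft hh u
  have c1 (a : E) := c (contDiff_dirD a hf)
  have c2 (a b : E) := c (contDiff_dirD a (contDiff_dirD b hf))
  have c3 (a b d : E) := c (contDiff_dirD a (contDiff_dirD b (contDiff_dirD d hf)))
  have p (w : V) := GermD.self u (contDiffAt_dirD w hft)
  have s (w : V) := GermD.self u (contDiffAt_dirD u (contDiffAt_dirD w hft))
  have t := GermD.self u (contDiffAt_dirD u (contDiffAt_dirD u (contDiffAt_dirD v hft)))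
  have g1 (w : V) := GermD.dirD_eventuallyEq he (GermD.comp ι L hft hf w)
  have g2 (w : V) := GermD.dirD_eventuallyEq (g1 w) ((c1 _).add ((p w).mul (c1 _)))
  have g3 := GermD.dirD_eventuallyEq (g2 v)
    (((c2 _ _).add ((p u).mul (c2 _ _))).add
      (((s v).mul (c1 _)).add ((p v).mul ((c2 _ _).add ((p u).mul (c2 _ _))))))
  have g4 := GermD.dirD_eventuallyEq g3
    ((((c3 _ _ _).add ((p u).mul (c3 _ _ _))).add
        (((s u).mul (c2 _ _)).add ((p u).mul ((c3 _ _ _).add ((p u).mul (c3 _ _ _)))))).add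
      (((t.mul (c1 _)).add ((s v).mul ((c2 _ _).add ((p u).mul (c2 _ _))))).add
        (((s v).mul ((c2 _ _).add ((p u).mul (c2 _ _)))).add
          ((p v).mul (((c3 _ _ _).add ((p u).mul (c3 _ _ _))).add
            (((s u).mul (c2 _ _)).add ((p u).mul ((c3 _ _ _).add ((p u).mul (c3 _ _ _))))))))))
  have h1 (w : V) : dirD w ft 0 = 0 := by
    simpa [hft0, hd] using (g1 w).eq_of_nhds
  have h2 (w : V) : dirD u (dirD w ft) 0 = dirD (ι u) (dirD (ι w) f) 0 := by
    simpa [hft0, hd, h1] using (g2 w).eq_of_nhds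
  refine ⟨by simpa [hft0, hd, h1, hu, hv] using g3.eq_of_nhds, ?_⟩
  have h := g4.eq_of_nhds
  simp only [Pi.add_apply, Pi.mul_apply, map_zero, hft0, zero_smul, add_zero, hd, h1, h2, hu,
    hv, zero_mul, mul_zero, zero_add] at h
  rw [h]
  ring

end Section

/-- Iterated Fréchet derivatives arise by successively differentiating in the first slot. -/
lemma dirD_iteratedFDeriv_germ {h : V → ℝ} (hh : ContDiffAt ℝ ∞ h 0) (j : ℕ) (v : V)
    (m : Fin j → V) :
    dirD v (fun y => iteratedFDeriv ℝ j h y m)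
      =ᶠ[𝓝 0] fun x => iteratedFDeriv ℝ (j + 1) h x (Matrix.vecCons v m) := by
  have h1 : ContDiffAt ℝ (j + 1 : ℕ) h 0 := hh.of_le (by exact_mod_cast le_top)
  filter_upwards [h1.eventually (by simp)] with x hx
  have hd : DifferentiableAt ℝ (iteratedFDeriv ℝ j h) x :=
    ContDiffAt.differentiableAt (n := 1)
      (hx.iteratedFDeriv_right (by push_cast; rw [add_comm])) (by simp)
  rw [iteratedFDeriv_succ_apply_left]
  simp only [dirD]
  have h2 := (hd.hasFDerivAt.continuousMultilinear_apply_const m).fderiv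
  rw [h2]
  rfl


lemma iteratedFDeriv_two_germ {h : V → ℝ} (hh : ContDiffAt ℝ ∞ h 0) (a b : V) :
    dirD a (dirD b h) =ᶠ[𝓝 0] fun x => iteratedFDeriv ℝ 2 h x ![a, b] := by
  have e1 : dirD b h =ᶠ[𝓝 0] fun x => iteratedFDeriv ℝ 1 h x ![b] := by
    simpa using dirD_iteratedFDeriv_germ hh 0 b ![]
  exact (dirD_congr e1 a).trans (dirD_iteratedFDeriv_germ hh 1 a ![b])

lemma iteratedFDeriv_three_germ {h : V → ℝ} (hh : ContDiffAt ℝ ∞ h 0) (a b c : V) :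
    dirD a (dirD b (dirD c h)) =ᶠ[𝓝 0] fun x => iteratedFDeriv ℝ 3 h x ![a, b, c] :=
  (dirD_congr (iteratedFDeriv_two_germ hh b c) a).trans (dirD_iteratedFDeriv_germ hh 2 a ![b, c])

lemma iteratedFDeriv_four_germ {h : V → ℝ} (hh : ContDiffAt ℝ ∞ h 0) (a b c d : V) :
    dirD a (dirD b (dirD c (dirD d h))) =ᶠ[𝓝 0]
      fun x => iteratedFDeriv ℝ 4 h x ![a, b, c, d] :=
  (dirD_congr (iteratedFDeriv_three_germ hh b c d) a).trans
    (dirD_iteratedFDeriv_germ hh 3 a ![b, c, d])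

end DirectionalDerivatives

section Coordinates

variable {n : ℕ}

lemma dirD_eq_sum (L : Fin n → ℝ) (h : (Fin n → ℝ) → ℝ) :
    dirD L h = fun x => ∑ i, L i * dirD (stdBasis n i) h x := by
  funext x
  have hL : L = ∑ i, L i • stdBasis n i := by
    simpa [stdBasis] using pi_eq_sum_univ' L
  simp only [dirD]
  conv_lhs => rw [hL]
  simp [map_sum]

lemma dirD_sum (u : Fin n → ℝ) (L : Fin n → ℝ) {h : Fin n → (Fin n → ℝ) → ℝ}
    (hh : ∀ i, ContDiff ℝ ∞ (h i)) :
    dirD u (fun x => ∑ i, L i * h i x) = fun x => ∑ i, L i * dirD u (h i) x := by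
  funext x
  have hd (i : Fin n) : DifferentiableAt ℝ (h i) x := (hh i).differentiable (by simp) x
  simp only [dirD]
  rw [fderiv_fun_sum fun i _ => (hd i).const_mul _]
  simp [fderiv_const_mul (hd _)]

/-- A sum over `Fin n` of terms supported on the first `m` indices. -/
lemma sum_dite_lt {m : ℕ} (hmn : m ≤ n) (G : Fin m → ℝ) :
    ∑ i : Fin n, (if h : (i : ℕ) < m then G ⟨i.1, h⟩ else 0) = ∑ σ, G σ := by
  symm
  apply Finset.sum_of_injOn (Fin.castLE hmn)
  · exact (Fin.castLE_injective hmn).injOn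
  · simp
  · intro i _ hi
    rw [dif_neg]
    intro h
    exact hi ⟨⟨i, h⟩, by simp, rfl⟩
  · intro i _
    simp

/-- The inclusion of `ℝᵐ` in `ℝⁿ` as the first `m` coordinates. -/
noncomputable def inclCoord (m n : ℕ) : (Fin m → ℝ) →L[ℝ] (Fin n → ℝ) :=
  ContinuousLinearMap.pi fun i =>
    if h : (i : ℕ) < m then ContinuousLinearMap.proj ⟨i.1, h⟩ else 0

lemma inclCoord_apply {m : ℕ} (x : Fin m → ℝ) (i : Fin n) :
    inclCoord m n x i = if h : (i : ℕ) < m then x ⟨i.1, h⟩ else 0 := by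
  simp only [inclCoord, ContinuousLinearMap.coe_pi']
  split_ifs <;> rfl

lemma inclCoord_stdBasis {m : ℕ} (hmn : m ≤ n) (σ : Fin m) :
    inclCoord m n (stdBasis m σ) = stdBasis n (Fin.castLE hmn σ) := by
  funext i
  rw [inclCoord_apply]
  by_cases h : (i : ℕ) < m
  · simp [stdBasis, h, Pi.single_apply, Fin.ext_iff]
  · have : i ≠ Fin.castLE hmn σ := by
      rintro rfl
      exact h σ.2
    simp [stdBasis, h, this]

end Coordinates

/-- the Moutard quadric of the section `M_λ̄ = M ∩ π_λ̄` in the direction `x₁`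
coincides with the intersection of the Moutard hyperquadric of `M` in the direction `x₁`
with the `k`-space `π_λ̄ = {x_σ = λ_σ x_{n+1}, σ = k,…,n}`. -/
theorem statement7 (n : ℕ) [NeZero n] (hn : 3 ≤ n) (k : ℕ) (hk : 3 ≤ k) (hkn : k ≤ n)
    (ε : Fin n → ℝ) (hε : ∀ i, ε i = 1 ∨ ε i = -1)
    (K : Fin n → Fin n → Fin n → ℝ)
    (hKsym₁ : ∀ i j l, K i j l = K j i l)
    (hKsym₂ : ∀ i j l, K i j l = K i l j)
    (H : Fin n → Fin n → Fin n → Fin n → ℝ)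
    (hHsym₁ : ∀ i j l m, H i j l m = H j i l m)
    (hHsym₂ : ∀ i j l m, H i j l m = H i l j m)
    (hHsym₃ : ∀ i j l m, H i j l m = H i j m l)
    (f : (Fin n → ℝ) → ℝ)
    (hf : ContDiff ℝ (⊤ : ℕ∞) f) (hf0 : f 0 = 0) (hdf : fderiv ℝ f 0 = 0)
    (hf2 : ∀ i j, iteratedFDeriv ℝ 2 f 0 ![stdBasis n i, stdBasis n j]
      = if i = j then ε i else 0)
    (hf3 : ∀ i j l, iteratedFDeriv ℝ 3 f 0 ![stdBasis n i, stdBasis n j, stdBasis n l]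
      = 2 * K i j l)
    (hf4 : ∀ i j l m,
      iteratedFDeriv ℝ 4 f 0 ![stdBasis n i, stdBasis n j, stdBasis n l, stdBasis n m]
      = 2 * H i j l m)
    (lam : Fin n → ℝ)
    -- the section `M_λ̄` as a graph `x_{n+1} = ft(x₁,…,x_{k−1})`, defined implicitly:
    (ft : (Fin (k - 1) → ℝ) → ℝ) (hft : ContDiffAt ℝ (⊤ : ℕ∞) ft 0) (hft0 : ft 0 = 0)
    (hftf : ∀ᶠ x in 𝓝 (0 : Fin (k - 1) → ℝ),
      ft x = f (fun i => if h : (i : ℕ) < k - 1 then x ⟨i.1, h⟩ else lam i * ft x)) :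
    ∀ (x : Fin (k - 1) → ℝ) (y : ℝ),
      -- the Moutard hyperquadric polynomial of `M_λ̄` in the `x₁`-direction, built from
      -- the Taylor coefficients of `ft` at `0` by the same formulas, with the same signs:
      moutardPoly (⟨0, by omega⟩ : Fin (k - 1))
        (fun σ => ε (Fin.castLE (by omega) σ))
        (iteratedFDeriv ℝ 3 ft 0 ![stdBasis (k - 1) ⟨0, by omega⟩,
          stdBasis (k - 1) ⟨0, by omega⟩, stdBasis (k - 1) ⟨0, by omega⟩] / 2)
        (fun σ => iteratedFDeriv ℝ 3 ft 0 ![stdBasis (k - 1) ⟨0, by omega⟩,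
          stdBasis (k - 1) ⟨0, by omega⟩, stdBasis (k - 1) σ] / 2)
        ((1 / 9) * (3 * (iteratedFDeriv ℝ 4 ft 0 ![stdBasis (k - 1) ⟨0, by omega⟩,
            stdBasis (k - 1) ⟨0, by omega⟩, stdBasis (k - 1) ⟨0, by omega⟩,
            stdBasis (k - 1) ⟨0, by omega⟩] / 2)
          - 8 * ε 0 * (iteratedFDeriv ℝ 3 ft 0 ![stdBasis (k - 1) ⟨0, by omega⟩,
            stdBasis (k - 1) ⟨0, by omega⟩, stdBasis (k - 1) ⟨0, by omega⟩] / 2) ^ 2))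
        x y
      =
      -- the Moutard hyperquadric polynomial of `M`, restricted to the `k`-space `π_λ̄`:
      moutardPoly (0 : Fin n) ε (K 0 0 0) (fun σ => K 0 0 σ)
        ((1 / 9) * (3 * H 0 0 0 0 - 8 * ε 0 * (K 0 0 0) ^ 2))
        (fun i => if h : (i : ℕ) < k - 1 then x ⟨i.1, h⟩ else lam i * y) y := by
  have hk1 : k - 1 ≤ n := by omega
  have hm0 : 0 < k - 1 := by omega
  set L : Fin n → ℝ := fun i => if (i : ℕ) < k - 1 then 0 else lam i with hL
  set o : Fin (k - 1) := ⟨0, hm0⟩ with ho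
  have hcast0 : Fin.castLE hk1 o = (0 : Fin n) := by
    apply Fin.ext
    simp [ho]
  have hLc (σ : Fin (k - 1)) : L (Fin.castLE hk1 σ) = 0 := by simp [hL]
  have hpt (x : Fin (k - 1) → ℝ) (y : ℝ) :
      (fun i : Fin n => if h : (i : ℕ) < k - 1 then x ⟨i.1, h⟩ else lam i * y)
        = inclCoord (k - 1) n x + y • L := by
    funext i
    by_cases h : (i : ℕ) < k - 1 <;> simp [inclCoord_apply, hL, h, mul_comm]
  have he : ft =ᶠ[𝓝 0] fun x => f (inclCoord (k - 1) n x + ft x • L) := by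
    filter_upwards [hftf] with x hx
    rw [← hpt]
    exact hx
  have hd (a : Fin n → ℝ) : dirD a f 0 = 0 := by simp [dirD, hdf]
  have hfa : ContDiffAt ℝ ∞ f 0 := hf.contDiffAt
  have d2 (i j : Fin n) : dirD (stdBasis n i) (dirD (stdBasis n j) f) 0
      = if i = j then ε i else 0 := by
    rw [(iteratedFDeriv_two_germ hfa _ _).eq_of_nhds, hf2]
  have d3 (i j l : Fin n) :
      dirD (stdBasis n i) (dirD (stdBasis n j) (dirD (stdBasis n l) f)) 0 = 2 * K i j l := by
    rw [(iteratedFDeriv_three_germ hfa _ _ _).eq_of_nhds, hf3]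
  have hs (i : Fin n) : ContDiff ℝ ∞ (dirD (stdBasis n i) f) := contDiff_dirD _ hf
  have hs2 (a : Fin n → ℝ) (i : Fin n) : ContDiff ℝ ∞ (dirD a (dirD (stdBasis n i) f)) :=
    contDiff_dirD _ (hs i)
  have d2R (j : Fin n) : dirD (stdBasis n j) (dirD L f) 0 = L j * ε j := by
    rw [dirD_eq_sum L f, dirD_sum _ _ hs]
    simp [d2]
  have d2L (j : Fin n) : dirD L (dirD (stdBasis n j) f) 0 = L j * ε j := by
    rw [dirD_eq_sum L]
    simp [d2]
  have dLL : dirD L (dirD L f) 0 = ∑ i, ε i * L i ^ 2 := by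
    rw [dirD_eq_sum L]
    simp only [d2R]
    exact Finset.sum_congr rfl fun i _ => by ring
  set A : ℝ := ∑ i, K 0 0 i * L i with hA
  have d3a : dirD (stdBasis n 0) (dirD (stdBasis n 0) (dirD L f)) 0 = 2 * A := by
    rw [dirD_eq_sum L f, dirD_sum _ _ hs, dirD_sum _ _ (hs2 _)]
    simp only [d3, hA, Finset.mul_sum]
    exact Finset.sum_congr rfl fun i _ => by ring
  have d3b : dirD (stdBasis n 0) (dirD L (dirD (stdBasis n 0) f)) 0 = 2 * A := by
    rw [dirD_eq_sum L, dirD_sum _ _ fun i => contDiff_dirD _ (hs 0)]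
    simp only [d3, hA, Finset.mul_sum]
    exact Finset.sum_congr rfl fun i _ => by rw [hKsym₂]; ring
  have d3c : dirD L (dirD (stdBasis n 0) (dirD (stdBasis n 0) f)) 0 = 2 * A := by
    rw [dirD_eq_sum L]
    simp only [d3, hA, Finset.mul_sum]
    exact Finset.sum_congr rfl fun i _ => by rw [hKsym₁, hKsym₂]; ring
  have key (σ : Fin (k - 1)) := sectionDeriv (inclCoord (k - 1) n) L hf hft hft0 he hd
    (stdBasis (k - 1) o) (stdBasis (k - 1) σ)
    (by rw [inclCoord_stdBasis hk1, d2R, hLc, zero_mul])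
    (by rw [inclCoord_stdBasis hk1, d2L, hLc, zero_mul])
  have k3 (σ : Fin (k - 1)) : iteratedFDeriv ℝ 3 ft 0
      ![stdBasis (k - 1) o, stdBasis (k - 1) o, stdBasis (k - 1) σ]
      = 2 * K 0 0 (Fin.castLE hk1 σ) := by
    rw [← (iteratedFDeriv_three_germ hft _ _ _).eq_of_nhds, (key σ).1]
    simp only [inclCoord_stdBasis hk1, hcast0, d3]
  have k4 : iteratedFDeriv ℝ 4 ft 0
      ![stdBasis (k - 1) o, stdBasis (k - 1) o, stdBasis (k - 1) o, stdBasis (k - 1) o]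
      = 2 * H 0 0 0 0 + 12 * ε 0 * A + 3 * ε 0 ^ 2 * ∑ i, ε i * L i ^ 2 := by
    rw [← (iteratedFDeriv_four_germ hft _ _ _ _).eq_of_nhds, (key o).2]
    simp only [inclCoord_stdBasis hk1, hcast0, d2, d3a, d3b, d3c, dLL, if_true]
    rw [(iteratedFDeriv_four_germ hfa _ _ _ _).eq_of_nhds, hf4]
    ring
  have hε0 : ε 0 ^ 2 = 1 := by rcases hε 0 with h | h <;> simp [h]
  intro x y
  rw [hpt]
  simp only [k3, k4, mul_div_cancel_left₀ _ (two_ne_zero : (2 : ℝ) ≠ 0)]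
  -- Split both sums over `Fin n` into the coordinates of `x` and the coordinates of `L`.
  have q1 : ∑ i, ε i * (inclCoord (k - 1) n x + y • L) i ^ 2
      = ∑ σ, ε (Fin.castLE hk1 σ) * x σ ^ 2 + y ^ 2 * ∑ i, ε i * L i ^ 2 := by
    rw [← sum_dite_lt hk1, Finset.mul_sum, ← Finset.sum_add_distrib]
    refine Finset.sum_congr rfl fun i _ => ?_
    by_cases h : (i : ℕ) < k - 1
    · simp [inclCoord_apply, hL, h]
    · simp [inclCoord_apply, hL, h]
      ring
  have q2 : ∑ i, K 0 0 i * (inclCoord (k - 1) n x + y • L) i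
      = ∑ σ, K 0 0 (Fin.castLE hk1 σ) * x σ + y * A := by
    rw [← sum_dite_lt hk1, hA, Finset.mul_sum, ← Finset.sum_add_distrib]
    refine Finset.sum_congr rfl fun i _ => ?_
    by_cases h : (i : ℕ) < k - 1
    · simp [inclCoord_apply, hL, h]
    · simp [inclCoord_apply, hL, h]
      ring
  have q0 : (inclCoord (k - 1) n x + y • L) 0 = x o := by
    simp [inclCoord_apply, hL, hm0, ho]
  simp only [moutardPoly, Finset.sum_erase_eq_sub (Finset.mem_univ _), q1, q2, q0, hcast0, hε0]
  ring
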